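/- arXiv:2205.05210 — 2 statements merged into one kernel-verified Lean document; each statement's English description precedes it below -/
import Mathlib

section
/- Let λ > 0, θ > 0, −1 < α < 1, −1 < β < 1, and let μ be a positive Borel measure on [0,1) such that the measure ν defined by dν(t) = (1−t)^{λ−1} dμ(t) is a finite measure on [0,1). Then ν is a vanishing [1 + (β−α)/2]-Carleson measure on [0,1) if and only if there exists a compact continuous linear operator T on ℓ²(ℕ; ℂ) such that for every x ∈ ℓ²(ℕ; ℂ) and every n ∈ ℕ, (T x)(n) = Σ_{k≥0} μ_λ[k+n] (n+θ)^{β/2} (k+θ)^{−α/2} x(k), where μ_λ[m] = ∫_{[0,1)} t^m (1−t)^{λ−1} dμ(t). (This operator is the coordinate expression of the Hilbert-type operator H_λ^μ : F²_{θ,α} → F²_{θ,β} under the isometric identifications a_k ↦ (k+θ)^{α/2} √(k!) a_k and b_n ↦ (n+θ)^{β/2} √(n!) b_n of the weighted Fock spaces with ℓ².) -/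
open MeasureTheory

/-!
Put `s = 1 + (β - α) / 2 > 0`, and let `m j = ∫ t ^ j dν` be the moments of `ν`. The vanishing
`s`-Carleson property of `ν` is equivalent to `m j = o(j ^ (-s))`, and both implications of the
theorem go through this moment condition.

*Carleson implies compact.* Cutting `[0, 1)` into the layers `i ≤ j (1 - t) < i + 1`, on which
`t ^ j ≤ exp (-i)`, gives `j ^ s * m j ≤ ∑ i, exp (-i) * (j ^ s * ν [1 - (i + 1) / j, 1))`, which
tends to `0` by dominated convergence (`moment_tendsto`). Thus the matrix of the operator is
bounded by a multiple of
`K n k = (n + k + 2 θ) ^ (-s) * (n + θ) ^ (β / 2) * (k + θ) ^ (-α / 2)`, with an arbitrarily small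
constant on the rows `n ≥ N`. The kernel `K` is homogeneous of degree `-1`, and the Schur test with
weight `(n + θ) ^ (-1 / 2)` bounds it on `ℓ²`; the two sums involved (`kernel_sum`) converge
precisely because `-1 < β` and `α < 1`, and are of the stated form with exponents in `(0, 1)`
because `-1 < α` and `β < 1`. The operator is then a norm limit of the finite-rank operators given
by its first `N` rows (`exists_compact`).

*Compact implies Carleson.* The unit vectors `u_N = N ^ (-1 / 2) ∑_{N ≤ k < 2N} e_k` tend weakly to
`0`, so `⟪u_N, T u_N⟫ → 0` when `T` is compact (`compact_section`). As all entries are nonnegative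
and the moments decrease, this number is at least `c * N ^ s * m (4 N)`, and Bernoulli's inequality
gives `m (4 N) ≥ ν [1 - 1 / (8 N), 1) / 2` (`measure_le_moment`). Hence
`N ^ s * ν [1 - 1 / (8 N), 1) → 0`, and the floor of `1 / (8 (1 - t))` interpolates between the
integers (`vanishing_of_seq`).
-/

/-! ### Matrix operators on `ℓ²` -/

/-- **Schur test.** A nonnegative matrix for which `w` is a `C`-subinvariant weight, for the matrix and
for its transpose, defines an operator on `ℓ²` of norm at most `C`. The sums in the hypotheses are
finite, so that no summability has to be assumed. -/
theorem schur_test (A : ℕ → ℕ → ℝ) (hA : ∀ n k, 0 ≤ A n k) (w : ℕ → ℝ) (hw : ∀ n, 0 < w n)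
    (C : ℝ) (hC : 0 ≤ C)
    (hrow : ∀ n M, ∑ k ∈ Finset.range M, A n k * w k ≤ C * w n)
    (hcol : ∀ k M, ∑ n ∈ Finset.range M, A n k * w n ≤ C * w k) :
    ∃ T : lp (fun _ : ℕ => ℂ) 2 →L[ℂ] lp (fun _ : ℕ => ℂ) 2, ‖T‖ ≤ C ∧
      ∀ (x : lp (fun _ : ℕ => ℂ) 2) (n : ℕ), T x n = ∑' k : ℕ, ((A n k : ℝ) : ℂ) * x k := by
  have two : (0 : ℝ) < (2 : ENNReal).toReal := by norm_num
  have hx2 : ∀ (x : lp (fun _ : ℕ => ℂ) 2) (s : Finset ℕ), ∑ i ∈ s, ‖x i‖ ^ 2 ≤ ‖x‖ ^ 2 := by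
    intro x s
    have := lp.sum_rpow_le_norm_rpow two x s
    simpa using this
  -- Cauchy–Schwarz in each row, splitting `A n k = (A n k * w k) * (w k)⁻¹`, then exchange of the sums.
  have key : ∀ (x : lp (fun _ : ℕ => ℂ) 2) (M' M : ℕ),
      ∑ n ∈ Finset.range M', (∑ k ∈ Finset.range M, A n k * ‖x k‖) ^ 2 ≤ C ^ 2 * ‖x‖ ^ 2 := by
    intro x M' M
    have h1 : ∀ n, (∑ k ∈ Finset.range M, A n k * ‖x k‖) ^ 2 ≤
        C * ∑ k ∈ Finset.range M, (A n k * w n) * ((w k)⁻¹ * ‖x k‖ ^ 2) := by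
      intro n
      have h := Finset.sum_sq_le_sum_mul_sum_of_sq_le_mul (Finset.range M)
        (r := fun k => A n k * ‖x k‖) (f := fun k => A n k * w k)
        (g := fun k => A n k * ((w k)⁻¹ * ‖x k‖ ^ 2))
        (fun k _ => mul_nonneg (hA n k) (hw k).le)
        (fun k _ => mul_nonneg (hA n k) (mul_nonneg (inv_nonneg.2 (hw k).le) (sq_nonneg _)))
        (fun k _ => le_of_eq (by have := (hw k).ne'; field_simp))
      refine h.trans ((mul_le_mul_of_nonneg_right (hrow n M) (Finset.sum_nonneg fun k _ =>
        mul_nonneg (hA n k) (mul_nonneg (inv_nonneg.2 (hw k).le) (sq_nonneg _)))).trans_eq ?_)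
      rw [mul_assoc, Finset.mul_sum]
      congr 1
      exact Finset.sum_congr rfl fun k _ => by ring
    calc _ ≤ ∑ n ∈ Finset.range M', C * ∑ k ∈ Finset.range M,
            (A n k * w n) * ((w k)⁻¹ * ‖x k‖ ^ 2) := Finset.sum_le_sum fun n _ => h1 n
      _ = C * ∑ k ∈ Finset.range M, (∑ n ∈ Finset.range M', A n k * w n) *
            ((w k)⁻¹ * ‖x k‖ ^ 2) := by
          rw [← Finset.mul_sum, Finset.sum_comm]
          simp_rw [Finset.sum_mul]
      _ ≤ C * ∑ k ∈ Finset.range M, (C * w k) * ((w k)⁻¹ * ‖x k‖ ^ 2) := by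
          gcongr with k _
          · exact mul_nonneg (inv_nonneg.2 (hw k).le) (sq_nonneg _)
          · exact hcol k M'
      _ = C ^ 2 * ∑ k ∈ Finset.range M, ‖x k‖ ^ 2 := by
          rw [Finset.mul_sum, Finset.mul_sum]
          refine Finset.sum_congr rfl fun k _ => ?_
          have := (hw k).ne'
          field_simp
      _ ≤ _ := by gcongr; exact hx2 x _
  have hsum : ∀ (x : lp (fun _ : ℕ => ℂ) 2) (n : ℕ), Summable fun k => A n k * ‖x k‖ := by
    intro x n
    refine summable_of_sum_range_le (c := C * ‖x‖) (fun k => mul_nonneg (hA n k) (norm_nonneg _))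
      fun M => ?_
    refine abs_le_of_sq_le_sq' ?_ (by positivity) |>.2
    rw [mul_pow]
    refine le_trans ?_ (key x (n + 1) M)
    exact Finset.single_le_sum (f := fun n => (∑ k ∈ Finset.range M, A n k * ‖x k‖) ^ 2)
      (fun i _ => sq_nonneg _) (Finset.self_mem_range_succ n)
  have hsumc : ∀ (x : lp (fun _ : ℕ => ℂ) 2) (n : ℕ),
      Summable fun k => ((A n k : ℝ) : ℂ) * x k := by
    intro x n
    refine Summable.of_norm ?_
    simpa [abs_of_nonneg (hA n _)] using hsum x n
  have hbd : ∀ (x : lp (fun _ : ℕ => ℂ) 2) (s : Finset ℕ),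
      ∑ n ∈ s, ‖∑' k : ℕ, ((A n k : ℝ) : ℂ) * x k‖ ^ 2 ≤ C ^ 2 * ‖x‖ ^ 2 := by
    intro x s
    obtain ⟨M', hM'⟩ := s.exists_nat_subset_range
    have h1 : ∑ n ∈ Finset.range M', (∑' k, A n k * ‖x k‖) ^ 2 ≤ C ^ 2 * ‖x‖ ^ 2 := by
      refine le_of_tendsto' (x := Filter.atTop) ?_ (key x M')
      exact tendsto_finsetSum _ fun n _ => ((hsum x n).hasSum.tendsto_sum_nat).pow 2
    refine (Finset.sum_le_sum_of_subset_of_nonneg hM' fun _ _ _ => sq_nonneg _).trans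
      (le_trans (Finset.sum_le_sum fun n _ => ?_) h1)
    gcongr
    refine (norm_tsum_le_tsum_norm ?_).trans_eq ?_
    · simpa [abs_of_nonneg (hA n _)] using hsum x n
    · simp [abs_of_nonneg (hA n _)]
  have hmem : ∀ x : lp (fun _ : ℕ => ℂ) 2,
      Memℓp (E := fun _ : ℕ => ℂ) (fun n => ∑' k : ℕ, ((A n k : ℝ) : ℂ) * x k) 2 := by
    intro x
    refine memℓp_gen' (C := C ^ 2 * ‖x‖ ^ 2) fun s => ?_
    simpa using hbd x s
  let L : lp (fun _ : ℕ => ℂ) 2 →ₗ[ℂ] lp (fun _ : ℕ => ℂ) 2 :=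
    { toFun := fun x => ⟨_, hmem x⟩
      map_add' := fun x y => by
        apply lp.ext
        funext n
        change ∑' k : ℕ, ((A n k : ℝ) : ℂ) * (x k + y k) = _ + _
        simp_rw [mul_add]
        exact (hsumc x n).tsum_add (hsumc y n)
      map_smul' := fun c x => by
        apply lp.ext
        funext n
        change ∑' k : ℕ, ((A n k : ℝ) : ℂ) * (c * x k) = c * _
        simp_rw [mul_left_comm _ c]
        exact tsum_mul_left }
  refine ⟨L.mkContinuous C fun x => ?_, LinearMap.mkContinuous_norm_le _ hC _, fun x n => rfl⟩
  refine lp.norm_le_of_forall_sum_le two (by positivity) fun s => ?_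
  have := hbd x s
  simp only [ENNReal.toReal_ofNat, Real.rpow_ofNat, mul_pow]
  exact this

/-- A matrix operator whose rows `n ≥ N` have small operator norm for large `N` is compact: it is a
norm limit of the finite-rank operators given by its first `N` rows. -/
theorem compact_of_tail (A : ℕ → ℕ → ℝ) (T : lp (fun _ : ℕ => ℂ) 2 →L[ℂ] lp (fun _ : ℕ => ℂ) 2)
    (hT : ∀ (x : lp (fun _ : ℕ => ℂ) 2) (n : ℕ), T x n = ∑' k : ℕ, ((A n k : ℝ) : ℂ) * x k)
    (h : ∀ ε > 0, ∃ N : ℕ, ∃ S : lp (fun _ : ℕ => ℂ) 2 →L[ℂ] lp (fun _ : ℕ => ℂ) 2, ‖S‖ ≤ ε ∧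
      ∀ (x : lp (fun _ : ℕ => ℂ) 2) (n : ℕ),
        S x n = ∑' k : ℕ, (((if N ≤ n then A n k else 0) : ℝ) : ℂ) * x k) :
    IsCompactOperator T := by
  have hcl := isClosed_setOfPred_isCompactOperator (σ₁₂ := RingHom.id ℂ)
    (M₁ := lp (fun _ : ℕ => ℂ) 2) (M₂ := lp (fun _ : ℕ => ℂ) 2)
  have : T ∈ closure {f : lp (fun _ : ℕ => ℂ) 2 →L[ℂ] lp (fun _ : ℕ => ℂ) 2 |
      IsCompactOperator f} := by
    rw [Metric.mem_closure_iff]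
    intro ε hε
    obtain ⟨N, S, hS, hSx⟩ := h (ε / 2) (by positivity)
    refine ⟨T - S, ?_, ?_⟩
    -- `T - S` consists of the rows `n < N` of `T`.
    · have e : T - S = ∑ i ∈ Finset.range N,
          (lp.singleContinuousLinearMap ℂ (fun _ : ℕ => ℂ) 2 i).comp
            ((lp.evalCLM ℂ (fun _ : ℕ => ℂ) 2 i).comp T) := by
        ext x n
        have hl : (T - S) x n = if n < N then T x n else 0 := by
          change T x n - S x n = _
          rw [hSx, hT]
          by_cases hn : N ≤ n
          · simp [hn, not_lt.2 hn]
          · simp [hn, not_le.1 hn]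
        rw [hl]
        rw [sum_apply, lp.coeFn_sum, Finset.sum_apply]
        change _ = ∑ i ∈ Finset.range N, (lp.single 2 i (T x i) : lp (fun _ : ℕ => ℂ) 2) n
        simp_rw [lp.coeFn_single, Pi.single_apply]
        simp
      change IsCompactOperator (T - S)
      rw [e]
      change _ ∈ compactOperator (RingHom.id ℂ) (lp (fun _ : ℕ => ℂ) 2) (lp (fun _ : ℕ => ℂ) 2)
      refine Submodule.sum_mem _ fun i _ => ?_
      have hc : IsCompactOperator (lp.singleContinuousLinearMap ℂ (fun _ : ℕ => ℂ) 2 i) :=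
        isCompactOperator_of_locallyCompactSpace_rng (M₂ := ℂ) _
      exact hc.comp_clm ((lp.evalCLM ℂ (fun _ : ℕ => ℂ) 2 i).comp T)
    · rw [dist_eq_norm, sub_sub_cancel]
      linarith
  exact hcl.closure_subset this

/-! ### Schur sums of the homogeneous kernel -/

/-- The mean value theorem for `y ^ (1 - q) / (1 - q)` on `[k + θ, k + 1 + θ]`. The factor
`(1 + 1 / θ) ^ q` pays for moving the value of the derivative back to the left endpoint. -/
theorem rpow_step (θ q : ℝ) (hθ : 0 < θ) (hq : 0 < q) (hq1 : q ≠ 1) (k : ℕ) :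
    ((k : ℝ) + θ) ^ (-q) ≤ (1 + 1 / θ) ^ q *
      ((((k + 1 : ℕ) : ℝ) + θ) ^ (1 - q) / (1 - q) - ((k : ℝ) + θ) ^ (1 - q) / (1 - q)) := by
  set y : ℝ := (k : ℝ) + θ with hy
  have hθy : θ ≤ y := by simp [hy]
  have hy0 : 0 < y := by linarith
  have e : (((k + 1 : ℕ) : ℝ) + θ) = y + 1 := by push_cast; ring
  rw [e]
  have hq1' : 1 - q ≠ 0 := sub_ne_zero.2 hq1.symm
  obtain ⟨ξ, ⟨h1, h2⟩, h3⟩ := exists_hasDerivAt_eq_slope (fun z : ℝ => z ^ (1 - q) / (1 - q))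
    (fun z => z ^ (-q)) (show y < y + 1 by linarith)
    (ContinuousOn.div_const (continuousOn_id.rpow_const fun z hz => Or.inl
      (by simp at hz ⊢; linarith [hz.1])) _)
    (fun z hz => by
      have := (Real.hasDerivAt_rpow_const (x := z) (p := 1 - q)
        (Or.inl (by linarith [hz.1] : z ≠ 0 ))).div_const (1 - q)
      refine this.congr_deriv ?_
      rw [mul_div_cancel_left₀ _ hq1']
      congr 1; ring)
  simp only [add_sub_cancel_left, div_one] at h3
  rw [← h3]
  have hξ : ξ ≤ (1 + 1 / θ) * y := by
    have : 1 ≤ 1 / θ * y := by rw [one_div, inv_mul_eq_div, le_div_iff₀ hθ]; linarith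
    linarith
  have hξ0 : 0 < ξ := by linarith
  rw [Real.rpow_neg hy0.le, Real.rpow_neg hξ0.le, ← div_eq_mul_inv, le_div_iff₀ (by positivity),
    inv_mul_le_iff₀ (by positivity), mul_comm, ← Real.mul_rpow (by positivity) (by positivity)]
  exact Real.rpow_le_rpow hξ0.le hξ hq.le

theorem sum_rpow_Ico (θ q : ℝ) (hθ : 0 < θ) (hq : 0 < q) (hq1 : q ≠ 1) (a b : ℕ) (hab : a ≤ b) :
    ∑ k ∈ Finset.Ico a b, ((k : ℝ) + θ) ^ (-q) ≤ (1 + 1 / θ) ^ q *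
      (((b : ℝ) + θ) ^ (1 - q) / (1 - q) - ((a : ℝ) + θ) ^ (1 - q) / (1 - q)) := by
  refine (Finset.sum_le_sum fun k _ => rpow_step θ q hθ hq hq1 k).trans_eq ?_
  rw [← Finset.mul_sum, Finset.sum_Ico_sub (fun k : ℕ => ((k : ℝ) + θ) ^ (1 - q) / (1 - q)) hab]

/-- The Schur sums of the homogeneous kernel `(x + y) ^ (-s)`: the terms with `k < n` contribute like
`x ^ (-s) * ∫_0^x y ^ (-γ)`, those with `k ≥ n` like `∫_x^∞ y ^ (-s - γ)`, where `x = n + θ`. -/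
theorem kernel_sum (θ s γ : ℝ) (hθ : 0 < θ) (hs : 0 < s) (hγ : 0 < γ) (hγ1 : γ < 1)
    (hsγ : 1 < s + γ) : ∃ C : ℝ, 0 < C ∧ ∀ n M : ℕ,
    ∑ k ∈ Finset.range M, ((n : ℝ) + k + 2 * θ) ^ (-s) * ((k : ℝ) + θ) ^ (-γ)
      ≤ C * ((n : ℝ) + θ) ^ (1 - s - γ) := by
  refine ⟨(1 + 1 / θ) ^ γ / (1 - γ) + (1 + 1 / θ) ^ (s + γ) / (s + γ - 1), ?_, fun n M => ?_⟩
  · have : 0 < 1 - γ := by linarith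
    have : 0 < s + γ - 1 := by linarith
    positivity
  have hγ' : 0 < 1 - γ := by linarith
  have hsγ' : 0 < s + γ - 1 := by linarith
  have h0 : ∀ k : ℕ, 0 < (k : ℝ) + θ := fun k => by positivity
  have hM : Finset.range M ⊆ Finset.range (n + M) := Finset.range_subset_range.2 (by omega)
  refine (Finset.sum_le_sum_of_subset_of_nonneg hM fun k _ _ => by positivity).trans ?_
  rw [← Finset.sum_range_add_sum_Ico _ (show n ≤ n + M by omega), add_mul]
  gcongr ?_ + ?_
  · calc _ ≤ ∑ k ∈ Finset.range n, ((n : ℝ) + θ) ^ (-s) * ((k : ℝ) + θ) ^ (-γ) := by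
          refine Finset.sum_le_sum fun k _ => ?_
          gcongr ?_ * _
          refine Real.rpow_le_rpow_of_nonpos (h0 n) ?_ (by linarith)
          have := h0 k
          linarith
      _ ≤ ((n : ℝ) + θ) ^ (-s) * ((1 + 1 / θ) ^ γ * (((n : ℝ) + θ) ^ (1 - γ) / (1 - γ))) := by
          rw [← Finset.mul_sum]
          gcongr
          have := sum_rpow_Ico θ γ hθ hγ hγ1.ne 0 n (by omega)
          rw [Finset.range_eq_Ico]
          refine this.trans ?_
          gcongr
          have : 0 ≤ (((0 : ℕ) : ℝ) + θ) ^ (1 - γ) / (1 - γ) := by positivity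
          linarith
      _ = _ := by
          have : ((n : ℝ) + θ) ^ (1 - s - γ) = ((n : ℝ) + θ) ^ (-s) * ((n : ℝ) + θ) ^ (1 - γ) := by
            rw [← Real.rpow_add (h0 n)]; ring_nf
          rw [this]; ring
  · calc _ ≤ ∑ k ∈ Finset.Ico n (n + M), ((k : ℝ) + θ) ^ (-(s + γ)) := by
          refine Finset.sum_le_sum fun k _ => ?_
          rw [neg_add, Real.rpow_add (h0 k)]
          gcongr ?_ * _
          refine Real.rpow_le_rpow_of_nonpos (h0 k) ?_ (by linarith)
          have := h0 n
          linarith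
      _ ≤ _ := sum_rpow_Ico θ (s + γ) hθ (by linarith) (by linarith) n (n + M) (by omega)
      _ ≤ (1 + 1 / θ) ^ (s + γ) * (((n : ℝ) + θ) ^ (1 - (s + γ)) / (s + γ - 1)) := by
          gcongr
          have : 0 ≤ (((n + M : ℕ) : ℝ) + θ) ^ (1 - (s + γ)) / (s + γ - 1) := by positivity
          have e : ∀ a : ℝ, a / (1 - (s + γ)) = -(a / (s + γ - 1)) := fun a => by
            rw [← div_neg, neg_sub]
          rw [e, e]
          linarith
      _ = _ := by rw [sub_sub]; ring

/-! ### Moments and Carleson conditions -/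

/-- The layers `i ≤ j (1 - t) < i + 1`, on each of which `t ^ j ≤ exp (-j (1 - t)) ≤ exp (-i)`. -/
theorem moment_le_sum (ν : Measure ℝ) [IsFiniteMeasure ν] (j : ℕ) (hj : 0 < j) :
    ∫ t in Set.Ico (0 : ℝ) 1, t ^ j ∂ν ≤ ∑ i ∈ Finset.range (j + 1),
      Real.exp (-i) * ν.real (Set.Ico (1 - ((i : ℝ) + 1) / j) 1) := by
  have hj' : (0 : ℝ) < j := by exact_mod_cast hj
  have hint : ∀ i ∈ Finset.range (j + 1), Integrable (fun t : ℝ => Real.exp (-i) *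
      (Set.Ico (1 - ((i : ℝ) + 1) / j) 1).indicator (fun _ => (1 : ℝ)) t)
      (ν.restrict (Set.Ico 0 1)) := fun i _ =>
    ((integrable_const (1 : ℝ)).indicator measurableSet_Ico).const_mul _
  have hle : ∀ t ∈ Set.Ico (0 : ℝ) 1, t ^ j ≤ ∑ i ∈ Finset.range (j + 1), Real.exp (-i) *
      (Set.Ico (1 - ((i : ℝ) + 1) / j) 1).indicator (fun _ => (1 : ℝ)) t := by
    intro t ht
    have h0 : 0 ≤ (j : ℝ) * (1 - t) := mul_nonneg hj'.le (by linarith [ht.2])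
    have hf := Nat.floor_le h0
    have hf' := Nat.lt_floor_add_one ((j : ℝ) * (1 - t))
    set i := ⌊(j : ℝ) * (1 - t)⌋₊
    have hij : i ≤ j := by
      have : (i : ℝ) ≤ j := by nlinarith [ht.1]
      exact_mod_cast this
    have hmem : t ∈ Set.Ico (1 - ((i : ℝ) + 1) / j) 1 := by
      refine ⟨?_, ht.2⟩
      have : 1 - t ≤ ((i : ℝ) + 1) / j := by
        rw [le_div_iff₀ hj']; linarith
      linarith
    calc t ^ j ≤ Real.exp (-(1 - t)) ^ j := by
          refine pow_le_pow_left₀ ht.1 ?_ j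
          have := Real.add_one_le_exp (-(1 - t))
          linarith
      _ = Real.exp (-(j * (1 - t))) := by rw [← Real.exp_nat_mul]; ring_nf
      _ ≤ Real.exp (-i) := Real.exp_le_exp.2 (by linarith)
      _ = Real.exp (-i) * (Set.Ico (1 - ((i : ℝ) + 1) / j) 1).indicator (fun _ => (1 : ℝ)) t := by
          rw [Set.indicator_of_mem hmem, mul_one]
      _ ≤ _ := Finset.single_le_sum (f := fun i : ℕ => Real.exp (-i) *
          (Set.Ico (1 - ((i : ℝ) + 1) / j) 1).indicator (fun _ => (1 : ℝ)) t)
          (fun i _ => mul_nonneg (Real.exp_pos _).le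
            (Set.indicator_nonneg (fun _ _ => zero_le_one) _))
          (Finset.mem_range.2 (by omega))
  calc _ ≤ ∫ t in Set.Ico (0 : ℝ) 1, ∑ i ∈ Finset.range (j + 1), Real.exp (-i) *
      (Set.Ico (1 - ((i : ℝ) + 1) / j) 1).indicator (fun _ => (1 : ℝ)) t ∂ν := by
        refine integral_mono_of_nonneg ?_ (integrable_finsetSum _ hint) ?_
        · filter_upwards [ae_restrict_mem measurableSet_Ico] with t ht
          exact pow_nonneg ht.1 _
        · filter_upwards [ae_restrict_mem measurableSet_Ico] with t ht using hle t ht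
    _ ≤ _ := by
        rw [integral_finsetSum _ hint]
        refine Finset.sum_le_sum fun i _ => ?_
        rw [integral_const_mul, integral_indicator measurableSet_Ico]
        simp only [integral_const, smul_eq_mul, mul_one]
        gcongr ?_ * ?_
        rw [measureReal_restrict_apply_univ]
        exact ENNReal.toReal_mono (measure_ne_top _ _) (Measure.restrict_apply_le _ _)

/-- The moments of a vanishing `s`-Carleson measure are `o(j ^ (-s))`. -/
theorem moment_tendsto (ν : Measure ℝ) [IsFiniteMeasure ν] (s C : ℝ)
    (hC : ∀ t < 1, ν.real (Set.Ico t 1) ≤ C * (1 - t) ^ s)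
    (h : Filter.Tendsto (fun t : ℝ => ν.real (Set.Ico t 1) / (1 - t) ^ s)
      (nhdsWithin 1 (Set.Iio 1)) (nhds 0)) :
    Filter.Tendsto (fun j : ℕ => (∫ t in Set.Ico (0 : ℝ) 1, t ^ j ∂ν) * (j : ℝ) ^ s)
      Filter.atTop (nhds 0) := by
  have hpow : ∀ i j : ℕ, 0 < j → (1 - (1 - ((i : ℝ) + 1) / j)) ^ s = ((i : ℝ) + 1) ^ s / j ^ s := by
    intro i j hj
    rw [sub_sub_cancel, Real.div_rpow (by positivity) (by positivity)]
  have hlt : ∀ i j : ℕ, 0 < j → 1 - ((i : ℝ) + 1) / j < 1 := by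
    intro i j hj
    have : 0 < ((i : ℝ) + 1) / j := by positivity
    linarith
  have hbound : ∀ i j : ℕ, 0 < j → Real.exp (-i) * (ν.real (Set.Ico (1 - ((i : ℝ) + 1) / j) 1) *
      (j : ℝ) ^ s) ≤ C * (((i : ℝ) + 1) ^ s * Real.exp (-i)) := by
    intro i j hj
    have h1 := hC _ (hlt i j hj)
    have hjs : (0 : ℝ) < (j : ℝ) ^ s := by positivity
    rw [hpow i j hj, ← mul_div_assoc, le_div_iff₀ hjs] at h1
    have := mul_le_mul_of_nonneg_left h1 (Real.exp_pos (-i)).le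
    linarith
  have hsumm : Summable fun i : ℕ => C * (((i : ℝ) + 1) ^ s * Real.exp (-i)) := by
    refine Summable.mul_left _ ?_
    -- Comparison with a geometric series times an integer power `p ≥ s`.
    obtain ⟨p, hp⟩ := exists_nat_ge s
    have h1 : Summable fun i : ℕ => ((i + 1 : ℕ) : ℝ) ^ p * Real.exp (-1) ^ (i + 1) :=
      (summable_nat_add_iff (f := fun i : ℕ => (i : ℝ) ^ p * Real.exp (-1) ^ i) 1).2 (summable_pow_mul_geometric_of_norm_lt_one p
        (by rw [Real.norm_eq_abs, abs_of_pos (Real.exp_pos _)]; exact Real.exp_lt_one_iff.2 (by norm_num)))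
    refine Summable.of_nonneg_of_le (fun i => by positivity) (fun i => ?_)
      (h1.mul_left (Real.exp 1))
    have e : Real.exp (-i) = Real.exp 1 * Real.exp (-1) ^ (i + 1) := by
      rw [← Real.exp_nat_mul, ← Real.exp_add]; push_cast; ring_nf
    rw [e, ← mul_assoc, mul_comm _ (Real.exp 1), mul_assoc]
    gcongr
    rw [← Real.rpow_natCast]
    push_cast
    exact Real.rpow_le_rpow_of_exponent_le (by linarith [(Nat.cast_nonneg i : (0 : ℝ) ≤ i)]) hp
  have hnn : ∀ i j : ℕ, 0 ≤ Real.exp (-i) * (ν.real (Set.Ico (1 - ((i : ℝ) + 1) / j) 1) *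
      (j : ℝ) ^ s) := fun i j => by positivity
  have hdom : Filter.Tendsto (fun j : ℕ => ∑' i : ℕ, Real.exp (-i) *
      (ν.real (Set.Ico (1 - ((i : ℝ) + 1) / j) 1) * (j : ℝ) ^ s)) Filter.atTop
      (nhds (∑' _ : ℕ, (0 : ℝ))) := by
    refine tendsto_tsum_of_dominated_convergence hsumm (fun i => ?_) ?_
    · have ht : Filter.Tendsto (fun j : ℕ => 1 - ((i : ℝ) + 1) / j) Filter.atTop
          (nhdsWithin 1 (Set.Iio 1)) := by
        refine tendsto_nhdsWithin_iff.2 ⟨?_, ?_⟩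
        · have := (tendsto_const_div_atTop_nhds_zero_nat ((i : ℝ) + 1)).const_sub 1
          simpa using this
        · filter_upwards [Filter.eventually_gt_atTop 0] with j hj using hlt i j hj
      have h2 := (h.comp ht).const_mul (Real.exp (-i) * ((i : ℝ) + 1) ^ s)
      rw [mul_zero] at h2
      refine h2.congr' ?_
      filter_upwards [Filter.eventually_gt_atTop 0] with j hj
      have hjs : (0 : ℝ) < (j : ℝ) ^ s := by positivity
      have his : (0 : ℝ) < ((i : ℝ) + 1) ^ s := by positivity
      simp only [Function.comp_apply]
      rw [hpow i j hj]
      field_simp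
    · filter_upwards [Filter.eventually_gt_atTop 0] with j hj i
      rw [Real.norm_eq_abs, abs_of_nonneg (hnn i j)]
      exact hbound i j hj
  rw [tsum_zero] at hdom
  refine squeeze_zero' (Filter.Eventually.of_forall fun j => ?_) ?_ hdom
  · exact mul_nonneg (setIntegral_nonneg measurableSet_Ico fun t ht => pow_nonneg ht.1 _)
      (by positivity)
  · filter_upwards [Filter.eventually_gt_atTop 0] with j hj
    refine (mul_le_mul_of_nonneg_right (moment_le_sum ν j hj) (by positivity)).trans ?_
    rw [Finset.sum_mul]
    simp_rw [mul_assoc]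
    exact (hsumm.of_nonneg_of_le (fun i => hnn i j) (fun i => hbound i j hj)).sum_le_tsum _
      fun i _ => hnn i j

theorem moment_tendsto_shift (m : ℕ → ℝ) (hm : ∀ j, 0 ≤ m j) (s θ : ℝ) (hs : 0 < s) (hθ : 0 < θ)
    (h : Filter.Tendsto (fun j : ℕ => m j * (j : ℝ) ^ s) Filter.atTop (nhds 0)) :
    Filter.Tendsto (fun j : ℕ => m j * ((j : ℝ) + 2 * θ) ^ s) Filter.atTop (nhds 0) := by
  have h' := h.const_mul ((1 + 2 * θ) ^ s)
  rw [mul_zero] at h'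
  refine squeeze_zero' (Filter.Eventually.of_forall fun j => ?_) ?_ h'
  · exact mul_nonneg (hm j) (by positivity)
  · filter_upwards [Filter.eventually_ge_atTop 1] with j hj
    have hj' : (1 : ℝ) ≤ j := by exact_mod_cast hj
    rw [mul_left_comm]
    refine mul_le_mul_of_nonneg_left ?_ (hm j)
    rw [← Real.mul_rpow (by positivity) (by positivity)]
    exact Real.rpow_le_rpow (by positivity) (by nlinarith) hs.le

/-- Bernoulli's inequality gives `t ^ (4 N) ≥ 1 / 2` for `t ≥ 1 - 1 / (8 N)`. -/
theorem measure_le_moment (ν : Measure ℝ) [IsFiniteMeasure ν] (N : ℕ) (hN : 0 < N) :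
    ν.real (Set.Ico (1 - 1 / (8 * N)) 1) ≤ 2 * ∫ t in Set.Ico (0 : ℝ) 1, t ^ (4 * N) ∂ν := by
  have hN' : (1 : ℝ) ≤ N := by exact_mod_cast hN
  have h8 : 1 / (8 * (N : ℝ)) ≤ 1 := by rw [div_le_one (by positivity)]; linarith
  set a : ℝ := 1 - 1 / (8 * N) with ha
  have ha0 : 0 ≤ a := by linarith
  have hint : IntegrableOn (fun t : ℝ => t ^ (4 * N)) (Set.Ico 0 1) ν := by
    refine Measure.integrableOn_of_bounded (M := 1) (measure_ne_top _ _)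
      (by fun_prop) ?_
    filter_upwards [ae_restrict_mem measurableSet_Ico] with t ht
    rw [Real.norm_eq_abs, abs_of_nonneg (pow_nonneg ht.1 _)]
    exact pow_le_one₀ ht.1 ht.2.le
  have hsub : Set.Ico a 1 ⊆ Set.Ico 0 1 := Set.Ico_subset_Ico_left ha0
  have hpow : ∀ t ∈ Set.Ico a 1, (1 / 2 : ℝ) ≤ t ^ (4 * N) := by
    intro t ht
    have hb := one_add_mul_le_pow (a := a - 1) (by linarith) (4 * N)
    have e : (1 : ℝ) + ((4 * N : ℕ) : ℝ) * (a - 1) = 1 / 2 := by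
      rw [ha]; push_cast; field_simp; ring
    rw [e, add_sub_cancel] at hb
    exact hb.trans (pow_le_pow_left₀ ha0 ht.1 _)
  have h1 : ∫ _ in Set.Ico a 1, (1 / 2 : ℝ) ∂ν ≤ ∫ t in Set.Ico a 1, t ^ (4 * N) ∂ν :=
    setIntegral_mono_on (integrable_const _) (hint.mono_set hsub) measurableSet_Ico hpow
  have h2 : ∫ t in Set.Ico a 1, t ^ (4 * N) ∂ν ≤ ∫ t in Set.Ico 0 1, t ^ (4 * N) ∂ν := by
    refine setIntegral_mono_set hint ?_ hsub.eventuallyLE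
    filter_upwards [ae_restrict_mem measurableSet_Ico] with t ht
    exact pow_nonneg ht.1 _
  rw [setIntegral_const, smul_eq_mul] at h1
  linarith

/-! ### Compact operators on blocks -/

/-- For compact `T` the sections `⟪u_N, T u_N⟫`, with `u_N` the normalised indicator of `[N, 2N)`, tend
to `0`. They are written here without the normalisation. Only finitely many centres are needed to
cover the image of the unit ball, and the functionals `⟪u_N, ·⟫`, of norm one, tend to `0` on each. -/
theorem compact_section (T : lp (fun _ : ℕ => ℂ) 2 →L[ℂ] lp (fun _ : ℕ => ℂ) 2)
    (hT : IsCompactOperator T) (ε : ℝ) (hε : 0 < ε) :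
    ∃ N₀ : ℕ, ∀ N ≥ N₀, ‖∑ n ∈ Finset.Ico N (2 * N),
      T (∑ k ∈ Finset.Ico N (2 * N), lp.single 2 k (1 : ℂ)) n‖ ≤ ε * N := by
  have two : (0 : ℝ) < (2 : ENNReal).toReal := by norm_num
  -- Cauchy–Schwarz against the indicator of `[N, 2N)`.
  have hcs : ∀ (y : lp (fun _ : ℕ => ℂ) 2) (N : ℕ), ‖∑ n ∈ Finset.Ico N (2 * N), y n‖ ≤
      √N * √(∑ n ∈ Finset.Ico N (2 * N), ‖y n‖ ^ 2) := by
    intro y N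
    refine (norm_sum_le _ _).trans ?_
    have := Real.sum_mul_le_sqrt_mul_sqrt (Finset.Ico N (2 * N)) (fun _ => 1) (fun n => ‖y n‖)
    have e : 2 * N - N = N := by omega
    simpa [e] using this
  have hnorm : ∀ (y : lp (fun _ : ℕ => ℂ) 2) (N : ℕ), ‖∑ n ∈ Finset.Ico N (2 * N), y n‖ ≤
      √N * ‖y‖ := by
    intro y N
    refine (hcs y N).trans ?_
    gcongr
    refine Real.sqrt_le_iff.2 ⟨norm_nonneg _, ?_⟩
    have := lp.sum_rpow_le_norm_rpow two y (Finset.Ico N (2 * N))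
    simpa using this
  have hpt : ∀ (y : lp (fun _ : ℕ => ℂ) 2) (δ : ℝ), 0 < δ →
      ∀ᶠ N : ℕ in Filter.atTop, ‖∑ n ∈ Finset.Ico N (2 * N), y n‖ ≤ √N * δ := by
    intro y δ hδ
    have hs : Summable fun n => ‖y n‖ ^ 2 := by
      have := (lp.memℓp y).summable two
      simpa using this
    have ht := hs.hasSum.tendsto_sum_nat
    have h2 : Filter.Tendsto (fun N : ℕ => 2 * N) Filter.atTop Filter.atTop :=
      Filter.tendsto_id.const_mul_atTop' (by norm_num)
    have hd := (ht.comp h2).sub ht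
    rw [sub_self] at hd
    filter_upwards [hd.eventually (gt_mem_nhds (show (0 : ℝ) < δ ^ 2 by positivity))] with N hN
    refine (hcs y N).trans ?_
    gcongr
    refine Real.sqrt_le_iff.2 ⟨hδ.le, ?_⟩
    rw [Finset.sum_Ico_eq_sub _ (by omega : N ≤ 2 * N)]
    exact hN.le
  obtain ⟨K, hK, hTK⟩ := IsCompactOperator.image_closedBall_subset_compact
    (f := (T : lp (fun _ : ℕ => ℂ) 2 →ₗ[ℂ] lp (fun _ : ℕ => ℂ) 2)) hT 1
  obtain ⟨t, ht, hcov⟩ := Metric.totallyBounded_iff.1 hK.totallyBounded (ε / 2) (by positivity)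
  have hall : ∀ᶠ N : ℕ in Filter.atTop, ∀ y ∈ t,
      ‖∑ n ∈ Finset.Ico N (2 * N), y n‖ ≤ √N * (ε / 2) :=
    (Filter.eventually_all_finite ht).2 fun y _ => hpt y _ (by positivity)
  obtain ⟨N₀, hN₀⟩ := Filter.eventually_atTop.1 hall
  refine ⟨N₀ + 1, fun N hN => ?_⟩
  have hN0 : (0 : ℝ) < N := by exact_mod_cast (by omega : 0 < N)
  set v : lp (fun _ : ℕ => ℂ) 2 := ∑ k ∈ Finset.Ico N (2 * N), lp.single 2 k (1 : ℂ) with hv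
  have hvn : ‖v‖ ≤ √N := by
    have := lp.norm_sum_single (E := fun _ : ℕ => ℂ) two (fun _ => (1 : ℂ)) (Finset.Ico N (2 * N))
    rw [← hv] at this
    have e : 2 * N - N = N := by omega
    simp [e] at this
    exact Real.le_sqrt_of_sq_le this.le
  have hsq : (0 : ℝ) < √N := Real.sqrt_pos.2 hN0
  set u : lp (fun _ : ℕ => ℂ) 2 := ((√N : ℂ)⁻¹) • v with hu
  have hTu : T u ∈ K := by
    refine hTK ⟨u, ?_, rfl⟩
    rw [mem_closedBall_zero_iff, hu, norm_smul, norm_inv, Complex.norm_real, Real.norm_eq_abs,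
      abs_of_pos hsq, inv_mul_le_iff₀ hsq]
    linarith
  obtain ⟨y, hy, hyd⟩ := Set.mem_iUnion₂.1 (hcov hTu)
  rw [Metric.mem_ball, dist_eq_norm] at hyd
  have hTv : T v = (√N : ℂ) • T u := by
    rw [hu, map_smul, smul_smul, mul_inv_cancel₀ (by exact_mod_cast hsq.ne'), one_smul]
  have hsplit : ∑ n ∈ Finset.Ico N (2 * N), (T v) n = (√N : ℂ) *
      (∑ n ∈ Finset.Ico N (2 * N), (T u - y) n + ∑ n ∈ Finset.Ico N (2 * N), y n) := by
    rw [← Finset.sum_add_distrib, Finset.mul_sum, hTv]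
    refine Finset.sum_congr rfl fun n _ => ?_
    change (√N : ℂ) * (T u) n = (√N : ℂ) * ((T u n - y n) + y n)
    ring
  rw [hsplit, norm_mul, Complex.norm_real, Real.norm_eq_abs, abs_of_pos hsq]
  have h1 := hnorm (T u - y) N
  have h2 := hN₀ N (by omega) y hy
  have h3 := norm_add_le (∑ n ∈ Finset.Ico N (2 * N), (T u - y) n) (∑ n ∈ Finset.Ico N (2 * N), y n)
  have h4 : √(N : ℝ) * √N = N := Real.mul_self_sqrt hN0.le
  calc _ ≤ √(N : ℝ) * (√N * ε) := by
        gcongr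
        nlinarith
    _ = ε * N := by rw [← mul_assoc, h4, mul_comm]

/-- `x ^ b` is comparable to `N ^ b` for `x` in `[N, (2 + θ) N]`, whatever the sign of `b`. -/
theorem rpow_lower (θ b x N : ℝ) (hN : 0 < N) (h1 : N ≤ x) (h2 : x ≤ (2 + θ) * N) :
    min 1 ((2 + θ) ^ b) * N ^ b ≤ x ^ b := by
  have hx : 1 ≤ x / N := (one_le_div hN).2 h1
  have e : x ^ b = (x / N) ^ b * N ^ b := by
    rw [← Real.mul_rpow (by positivity) hN.le, div_mul_cancel₀ _ hN.ne']
  rw [e]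
  gcongr
  rcases le_total 0 b with hb | hb
  · exact (min_le_left _ _).trans (Real.one_le_rpow hx hb)
  · exact (min_le_right _ _).trans
      (Real.rpow_le_rpow_of_nonpos (by linarith) ((div_le_iff₀ hN).2 h2) hb)

/-- Compactness forces `m (4 N) = o(N ^ (-s))`: all entries in the block `[N, 2N) × [N, 2N)` are at
least a constant times `m (4 N) * N ^ (β / 2 - α / 2)`. -/
theorem moment_tendsto_of_compact (θ α β : ℝ) (hθ : 0 < θ) (m : ℕ → ℝ) (hm0 : ∀ j, 0 ≤ m j)
    (hm : Antitone m) (T : lp (fun _ : ℕ => ℂ) 2 →L[ℂ] lp (fun _ : ℕ => ℂ) 2)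
    (hTc : IsCompactOperator T)
    (hT : ∀ (x : lp (fun _ : ℕ => ℂ) 2) (n : ℕ), T x n = ∑' k : ℕ,
      ((m (k + n) * ((n : ℝ) + θ) ^ (β / 2) * ((k : ℝ) + θ) ^ (-(α / 2)) : ℝ) : ℂ) * x k) :
    Filter.Tendsto (fun N : ℕ => m (4 * N) * (N : ℝ) ^ (1 + (β - α) / 2))
      Filter.atTop (nhds 0) := by
  set b := β / 2 with hb
  set a := -(α / 2) with ha
  have hs : 1 + (β - α) / 2 = 1 + (b + a) := by rw [hb, ha]; ring
  rw [hs]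
  set c := min 1 ((2 + θ) ^ b) * min 1 ((2 + θ) ^ a) with hc
  have hc0 : 0 < c := by positivity
  rw [Metric.tendsto_atTop]
  intro ε hε
  obtain ⟨N₀, hN₀⟩ := compact_section T hTc (c * (ε / 2)) (by positivity)
  refine ⟨N₀ + 1, fun N hN => ?_⟩
  have hN1 : 1 ≤ N := by omega
  have hN1' : (1 : ℝ) ≤ N := by exact_mod_cast hN1
  have hN0 : (0 : ℝ) < N := by linarith
  have h := hN₀ N (by omega)
  have hval : ∑ n ∈ Finset.Ico N (2 * N),
      T (∑ k ∈ Finset.Ico N (2 * N), lp.single 2 k (1 : ℂ)) n =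
      ((∑ n ∈ Finset.Ico N (2 * N), ∑ k ∈ Finset.Ico N (2 * N),
        m (k + n) * ((n : ℝ) + θ) ^ b * ((k : ℝ) + θ) ^ a : ℝ) : ℂ) := by
    rw [Complex.ofReal_sum]
    refine Finset.sum_congr rfl fun n _ => ?_
    have hv : ∀ k, (∑ k ∈ Finset.Ico N (2 * N), lp.single 2 k (1 : ℂ) : lp (fun _ : ℕ => ℂ) 2) k =
        if k ∈ Finset.Ico N (2 * N) then 1 else 0 := by
      intro k
      rw [lp.coeFn_sum, Finset.sum_apply]
      simp_rw [lp.coeFn_single, Pi.single_apply]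
      simp
    rw [hT, tsum_eq_sum (s := Finset.Ico N (2 * N)) fun k hk => by rw [hv, if_neg hk, mul_zero],
      Complex.ofReal_sum]
    exact Finset.sum_congr rfl fun k hk => by rw [hv, if_pos hk, mul_one]
  rw [hval, Complex.norm_real, Real.norm_eq_abs] at h
  have hlow : (N : ℝ) * (N * (m (4 * N) * (c * (N : ℝ) ^ (b + a)))) ≤
      ∑ n ∈ Finset.Ico N (2 * N), ∑ k ∈ Finset.Ico N (2 * N),
        m (k + n) * ((n : ℝ) + θ) ^ b * ((k : ℝ) + θ) ^ a := by
    have hcard : ∀ x : ℝ, (N : ℝ) * x = ∑ _n ∈ Finset.Ico N (2 * N), x := by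
      intro x
      have e : 2 * N - N = N := by omega
      simp [e]
    rw [hcard]
    refine Finset.sum_le_sum fun n hn => ?_
    rw [hcard]
    refine Finset.sum_le_sum fun k hk => ?_
    rw [Finset.mem_Ico] at hn hk
    have hn1 : (N : ℝ) ≤ n := by exact_mod_cast hn.1
    have hk1 : (N : ℝ) ≤ k := by exact_mod_cast hk.1
    have hn2 : (n : ℝ) ≤ 2 * N := by exact_mod_cast hn.2.le
    have hk2 : (k : ℝ) ≤ 2 * N := by exact_mod_cast hk.2.le
    have r1 := rpow_lower θ b (n + θ) N hN0 (by linarith) (by nlinarith)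
    have r2 := rpow_lower θ a (k + θ) N hN0 (by linarith) (by nlinarith)
    have r3 : m (4 * N) ≤ m (k + n) := hm (by omega)
    rw [Real.rpow_add hN0, hc, mul_mul_mul_comm, mul_assoc (m (k + n))]
    gcongr
    exact hm0 _
  have h1 := hlow.trans ((le_abs_self _).trans h)
  have h2 : c * ((N : ℝ) * (m (4 * N) * (N : ℝ) ^ (1 + (b + a)))) ≤ c * (N * (ε / 2)) := by
    rw [Real.rpow_add hN0 1, Real.rpow_one]
    linarith
  have h3 := le_of_mul_le_mul_left (le_of_mul_le_mul_left h2 hc0) hN0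
  rw [Real.dist_eq, sub_zero, abs_of_nonneg (mul_nonneg (hm0 _) (by positivity))]
  linarith

/-! ### From the moments back to the measure -/

/-- The vanishing Carleson condition need only be tested along `1 - t = 1 / (8 N)`. -/
theorem vanishing_of_seq (ν : Measure ℝ) [IsFiniteMeasure ν] (s : ℝ) (hs : 0 < s)
    (h : Filter.Tendsto (fun N : ℕ => ν.real (Set.Ico (1 - 1 / (8 * N)) 1) * (N : ℝ) ^ s)
      Filter.atTop (nhds 0)) :
    Filter.Tendsto (fun t : ℝ => ν.real (Set.Ico t 1) / (1 - t) ^ s)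
      (nhdsWithin 1 (Set.Iio 1)) (nhds 0) := by
  have hT : Filter.Tendsto (fun t : ℝ => (8 * (1 - t))⁻¹) (nhdsWithin 1 (Set.Iio 1))
      Filter.atTop := by
    refine Filter.Tendsto.inv_tendsto_nhdsGT_zero (tendsto_nhdsWithin_iff.2 ⟨?_, ?_⟩)
    · refine Filter.Tendsto.mono_left ?_ nhdsWithin_le_nhds
      have : Continuous fun t : ℝ => 8 * (1 - t) := by fun_prop
      simpa using this.tendsto 1
    · filter_upwards [self_mem_nhdsWithin] with t ht
      have : t < 1 := ht
      change 0 < 8 * (1 - t)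
      linarith
  have h2 := (h.comp (tendsto_nat_floor_atTop.comp hT)).const_mul (16 ^ s)
  rw [mul_zero] at h2
  refine squeeze_zero' ?_ ?_ h2
  · filter_upwards [self_mem_nhdsWithin] with t ht
    have : 0 < 1 - t := sub_pos.2 ht
    positivity
  · filter_upwards [self_mem_nhdsWithin, hT.eventually_ge_atTop 1] with t ht ht1
    have ht0 : 0 < 1 - t := sub_pos.2 ht
    simp only [Function.comp_apply]
    have hN1 : 1 ≤ ⌊(8 * (1 - t))⁻¹⌋₊ := Nat.one_le_floor_iff _ |>.2 ht1
    have hf := Nat.floor_le (show 0 ≤ (8 * (1 - t))⁻¹ by positivity)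
    have hf' := Nat.lt_floor_add_one ((8 * (1 - t))⁻¹)
    set N := ⌊(8 * (1 - t))⁻¹⌋₊
    have hN1' : (1 : ℝ) ≤ N := by exact_mod_cast hN1
    have hN0 : (0 : ℝ) < N := by linarith
    have hle : 1 - 1 / (8 * (N : ℝ)) ≤ t := by
      rw [le_inv_comm₀ hN0 (by positivity)] at hf
      have e : 1 / (8 * (N : ℝ)) = (N : ℝ)⁻¹ / 8 := by field_simp
      rw [e]; linarith
    have hinv : (1 - t)⁻¹ ≤ 16 * N := by
      have e : (8 * (1 - t))⁻¹ = (1 - t)⁻¹ / 8 := by field_simp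
      rw [e] at hf'
      linarith
    have hm : ν.real (Set.Ico t 1) ≤ ν.real (Set.Ico (1 - 1 / (8 * (N : ℝ))) 1) :=
      measureReal_mono (Set.Ico_subset_Ico_left hle)
    rw [div_eq_mul_inv, ← Real.inv_rpow ht0.le, mul_left_comm,
      ← Real.mul_rpow (by norm_num) hN0.le]
    gcongr

/-- For a finite measure the vanishing condition contains the Carleson bound: near `1` the quotient is
at most `1`, and away from `1` the total mass suffices. -/
theorem carleson_of_vanishing (ν : Measure ℝ) [IsFiniteMeasure ν] (s : ℝ) (hs : 0 < s)
    (h : Filter.Tendsto (fun t : ℝ => ν.real (Set.Ico t 1) / (1 - t) ^ s)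
      (nhdsWithin 1 (Set.Iio 1)) (nhds 0)) :
    ∃ C : ℝ, 0 < C ∧ ∀ t ∈ Set.Ico (0 : ℝ) 1, ν.real (Set.Ico t 1) ≤ C * (1 - t) ^ s := by
  have h1 := h.eventually (gt_mem_nhds one_pos)
  obtain ⟨l, hl, hl'⟩ := (mem_nhdsLT_iff_exists_Ioo_subset).1 h1
  have hl1 : 0 < 1 - l := sub_pos.2 hl
  refine ⟨1 + ν.real Set.univ / (1 - l) ^ s, by positivity, fun t ht => ?_⟩
  have ht0 : 0 < 1 - t := sub_pos.2 ht.2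
  have hp : 0 ≤ ν.real Set.univ / (1 - l) ^ s := by positivity
  rcases lt_or_ge l t with hlt | hlt
  · have : ν.real (Set.Ico t 1) / (1 - t) ^ s < 1 := hl' ⟨hlt, ht.2⟩
    rw [div_lt_one (by positivity)] at this
    have hq : 0 < (1 - t) ^ s := by positivity
    nlinarith
  · calc ν.real (Set.Ico t 1) ≤ ν.real Set.univ := measureReal_mono (Set.subset_univ _)
      _ = ν.real Set.univ / (1 - l) ^ s * (1 - l) ^ s := by field_simp
      _ ≤ ν.real Set.univ / (1 - l) ^ s * (1 - t) ^ s := by gcongr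
      _ ≤ _ := by
        have hq : 0 < (1 - t) ^ s := by positivity
        nlinarith

/-! ### Boundedness and compactness from the moments -/

/-- Moments that are `o(j ^ (-s))` give a compact operator, by the Schur test with weight
`(n + θ) ^ (-1 / 2)` applied to the whole matrix and to its rows `n ≥ N`. -/
theorem exists_compact (θ α β : ℝ) (hθ : 0 < θ) (hα₁ : -1 < α) (hα₂ : α < 1) (hβ₁ : -1 < β)
    (hβ₂ : β < 1) (m : ℕ → ℝ) (hm0 : ∀ j, 0 ≤ m j)
    (hm : Filter.Tendsto (fun j : ℕ => m j * ((j : ℝ) + 2 * θ) ^ (1 + (β - α) / 2))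
      Filter.atTop (nhds 0)) :
    ∃ T : lp (fun _ : ℕ => ℂ) 2 →L[ℂ] lp (fun _ : ℕ => ℂ) 2, IsCompactOperator T ∧
      ∀ (x : lp (fun _ : ℕ => ℂ) 2) (n : ℕ), T x n = ∑' k : ℕ,
      ((m (k + n) * ((n : ℝ) + θ) ^ (β / 2) * ((k : ℝ) + θ) ^ (-(α / 2)) : ℝ) : ℂ) * x k := by
  set s := 1 + (β - α) / 2 with hs
  have hs0 : 0 < s := by rw [hs]; linarith
  set A : ℕ → ℕ → ℝ := fun n k =>
    m (k + n) * ((n : ℝ) + θ) ^ (β / 2) * ((k : ℝ) + θ) ^ (-(α / 2)) with hA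
  have hA0 : ∀ n k, 0 ≤ A n k := fun n k =>
    mul_nonneg (mul_nonneg (hm0 _) (by positivity)) (by positivity)
  have hp : ∀ k : ℕ, 0 < (k : ℝ) + θ := fun k => by positivity
  set w : ℕ → ℝ := fun n => ((n : ℝ) + θ) ^ (-(1 / 2) : ℝ) with hw
  have hw0 : ∀ n, 0 < w n := fun n => Real.rpow_pos_of_pos (hp n) _
  obtain ⟨C₁, hC₁, h1⟩ := kernel_sum θ s ((1 + α) / 2) hθ hs0 (by linarith) (by linarith)
    (by rw [hs]; linarith)
  obtain ⟨C₂, hC₂, h2⟩ := kernel_sum θ s ((1 - β) / 2) hθ hs0 (by linarith) (by linarith)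
    (by rw [hs]; linarith)
  set C := max C₁ C₂ with hC
  have hC0 : 0 < C := lt_max_of_lt_left hC₁
  -- Applied with all rows and `ε` a bound for the moments, and with the rows `n ≥ N` and `ε` small.
  have main : ∀ (P : ℕ → Prop) [DecidablePred P] (ε : ℝ), 0 ≤ ε →
      (∀ n, P n → ∀ k, m (k + n) * (((k + n : ℕ) : ℝ) + 2 * θ) ^ s ≤ ε) →
      ∃ S : lp (fun _ : ℕ => ℂ) 2 →L[ℂ] lp (fun _ : ℕ => ℂ) 2, ‖S‖ ≤ ε * C ∧
      ∀ (x : lp (fun _ : ℕ => ℂ) 2) (n : ℕ),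
        S x n = ∑' k : ℕ, (((if P n then A n k else 0) : ℝ) : ℂ) * x k := by
    intro P _ ε hε hP
    have hdom : ∀ n k, (if P n then A n k else 0) ≤ ε * (((n : ℝ) + k + 2 * θ) ^ (-s) *
        ((n : ℝ) + θ) ^ (β / 2) * ((k : ℝ) + θ) ^ (-(α / 2))) := by
      intro n k
      split_ifs with hn
      · have h := hP n hn k
        have e : ((k + n : ℕ) : ℝ) + 2 * θ = (n : ℝ) + k + 2 * θ := by push_cast; ring
        rw [e] at h
        have hq : 0 < (n : ℝ) + k + 2 * θ := by positivity
        rw [← le_div_iff₀ (by positivity), div_eq_mul_inv, ← Real.rpow_neg hq.le] at h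
        rw [← mul_assoc, ← mul_assoc]
        simp only [hA]
        gcongr
      · positivity
    refine schur_test (fun n k => if P n then A n k else 0) (fun n k => ?_) w hw0 (ε * C)
      (by positivity) (fun n M => ?_) (fun k M => ?_)
    · split_ifs
      exacts [hA0 n k, le_rfl]
    · calc _ ≤ ∑ k ∈ Finset.range M, ε * ((n : ℝ) + θ) ^ (β / 2) *
            (((n : ℝ) + k + 2 * θ) ^ (-s) * ((k : ℝ) + θ) ^ (-((1 + α) / 2))) := by
            refine Finset.sum_le_sum fun k _ => ?_
            refine (mul_le_mul_of_nonneg_right (hdom n k) (hw0 k).le).trans_eq ?_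
            have e : ((k : ℝ) + θ) ^ (-((1 + α) / 2)) = ((k : ℝ) + θ) ^ (-(α / 2)) * w k := by
              rw [hw, ← Real.rpow_add (hp k)]; ring_nf
            rw [e]; ring
        _ ≤ ε * ((n : ℝ) + θ) ^ (β / 2) * (C * ((n : ℝ) + θ) ^ (1 - s - (1 + α) / 2)) := by
            rw [← Finset.mul_sum]
            gcongr
            refine (h1 n M).trans ?_
            gcongr
            exact le_max_left _ _
        _ = _ := by
            have e : w n = ((n : ℝ) + θ) ^ (β / 2) * ((n : ℝ) + θ) ^ (1 - s - (1 + α) / 2) := by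
              rw [hw, ← Real.rpow_add (hp n), hs]; ring_nf
            rw [e]; ring
    · calc _ ≤ ∑ n ∈ Finset.range M, ε * ((k : ℝ) + θ) ^ (-(α / 2)) *
            (((k : ℝ) + n + 2 * θ) ^ (-s) * ((n : ℝ) + θ) ^ (-((1 - β) / 2))) := by
            refine Finset.sum_le_sum fun n _ => ?_
            refine (mul_le_mul_of_nonneg_right (hdom n k) (hw0 n).le).trans_eq ?_
            have e : ((n : ℝ) + θ) ^ (-((1 - β) / 2)) = ((n : ℝ) + θ) ^ (β / 2) * w n := by
              rw [hw, ← Real.rpow_add (hp n)]; ring_nf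
            rw [e, add_comm (k : ℝ) n]; ring
        _ ≤ ε * ((k : ℝ) + θ) ^ (-(α / 2)) * (C * ((k : ℝ) + θ) ^ (1 - s - (1 - β) / 2)) := by
            rw [← Finset.mul_sum]
            gcongr
            refine (h2 k M).trans ?_
            gcongr
            exact le_max_right _ _
        _ = _ := by
            have e : w k = ((k : ℝ) + θ) ^ (-(α / 2)) * ((k : ℝ) + θ) ^ (1 - s - (1 - β) / 2) := by
              rw [hw, ← Real.rpow_add (hp k), hs]; ring_nf
            rw [e]; ring
  obtain ⟨B, hB⟩ := hm.bddAbove_range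
  have hB' : ∀ j : ℕ, m j * ((j : ℝ) + 2 * θ) ^ s ≤ B := fun j => hB ⟨j, rfl⟩
  have hB0 : 0 ≤ B := le_trans (mul_nonneg (hm0 0) (by positivity)) (hB' 0)
  obtain ⟨T, -, hT⟩ := main (fun _ => True) B hB0 fun n _ k => hB' (k + n)
  simp only [if_true] at hT
  refine ⟨T, compact_of_tail A T hT fun ε hε => ?_, hT⟩
  obtain ⟨N, hN⟩ := Filter.eventually_atTop.1
    (hm.eventually (gt_mem_nhds (show (0 : ℝ) < ε / C by positivity)))
  obtain ⟨S, hS, hSx⟩ := main (fun n => N ≤ n) (ε / C) (by positivity)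
    fun n hn k => (hN (k + n) (by omega)).le
  exact ⟨N, S, by rwa [div_mul_cancel₀ _ hC0.ne'] at hS, hSx⟩

/-- **Proposition 6.2 (2).** For `λ > 0`, `θ > 0`, `−1 < α < 1`, `−1 < β < 1`
and a positive Borel measure `μ` on `[0,1)` with `dν(t) = (1−t)^{λ−1} dμ(t)` finite:
`ν` is a vanishing `[1 + (β−α)/2]`-Carleson measure if and only if the coordinate
expression on `ℓ²(ℕ; ℂ)` of the Hilbert-type operator `H_λ^μ : F²_{θ,α} → F²_{θ,β}`, with
moments `μ_λ[m] = ∫_{[0,1)} t^m (1−t)^{λ−1} dμ(t)`, is a compact continuous linear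
operator. -/
theorem hilbert_type_lambda_measure_operator_compact_iff_vanishing_carleson
    (lam θ α β : ℝ) (hlam : 0 < lam) (hθ : 0 < θ)
    (hα₁ : -1 < α) (hα₂ : α < 1) (hβ₁ : -1 < β) (hβ₂ : β < 1)
    (μ : Measure ℝ) (hsupp : μ (Set.Ico (0 : ℝ) 1)ᶜ = 0)
    [IsFiniteMeasure (μ.withDensity fun t => ENNReal.ofReal ((1 - t) ^ (lam - 1)))] :
    ((∃ C₁ : ℝ, 0 < C₁ ∧ ∀ t ∈ Set.Ico (0 : ℝ) 1,
        (μ.withDensity fun t => ENNReal.ofReal ((1 - t) ^ (lam - 1))) (Set.Ico t 1)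
          ≤ ENNReal.ofReal (C₁ * (1 - t) ^ (1 + (β - α) / 2))) ∧
      Filter.Tendsto
        (fun t : ℝ =>
          ((μ.withDensity fun t => ENNReal.ofReal ((1 - t) ^ (lam - 1))) (Set.Ico t 1)).toReal /
            (1 - t) ^ (1 + (β - α) / 2))
        (nhdsWithin 1 (Set.Iio 1)) (nhds 0)) ↔
    (∃ T : lp (fun _ : ℕ => ℂ) 2 →L[ℂ] lp (fun _ : ℕ => ℂ) 2,
      IsCompactOperator T ∧
      ∀ (x : lp (fun _ : ℕ => ℂ) 2) (n : ℕ),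
        T x n = ∑' k : ℕ, (((∫ t in Set.Ico (0 : ℝ) 1, t ^ (k + n) * (1 - t) ^ (lam - 1) ∂μ) *
            ((n : ℝ) + θ) ^ (β / 2) * ((k : ℝ) + θ) ^ (-(α / 2)) : ℝ) : ℂ) * x k) := by
  have hmeas : Measurable fun t : ℝ => ENNReal.ofReal ((1 - t) ^ (lam - 1)) := by fun_prop
  have hmom : ∀ j : ℕ, ∫ t in Set.Ico (0 : ℝ) 1, t ^ j * (1 - t) ^ (lam - 1) ∂μ =
      ∫ t in Set.Ico (0 : ℝ) 1, t ^ j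
        ∂(μ.withDensity fun t => ENNReal.ofReal ((1 - t) ^ (lam - 1))) := by
    intro j
    rw [setIntegral_withDensity_eq_setIntegral_toReal_smul hmeas
      (Filter.Eventually.of_forall fun t => ENNReal.ofReal_lt_top) _ measurableSet_Ico]
    refine setIntegral_congr_fun measurableSet_Ico fun t ht => ?_
    have h1 : 0 ≤ 1 - t := by linarith [ht.2]
    simp only [smul_eq_mul]
    rw [ENNReal.toReal_ofReal (Real.rpow_nonneg h1 _), mul_comm]
  have hsupp' : (μ.withDensity fun t => ENNReal.ofReal ((1 - t) ^ (lam - 1)))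
      (Set.Ico (0 : ℝ) 1)ᶜ = 0 := withDensity_absolutelyContinuous _ _ hsupp
  simp_rw [hmom]
  generalize (μ.withDensity fun t => ENNReal.ofReal ((1 - t) ^ (lam - 1))) = ν at *
  set s := 1 + (β - α) / 2 with hs
  have hs0 : 0 < s := by rw [hs]; linarith
  set m : ℕ → ℝ := fun j => ∫ t in Set.Ico (0 : ℝ) 1, t ^ j ∂ν with hm
  have hm0 : ∀ j, 0 ≤ m j := fun j =>
    setIntegral_nonneg measurableSet_Ico fun t ht => pow_nonneg ht.1 _
  constructor
  · rintro ⟨⟨C, hC, hCt⟩, hv⟩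
    have hC' : ∀ t < 1, ν.real (Set.Ico t 1) ≤ C * (1 - t) ^ s := by
      have hreal : ∀ t ∈ Set.Ico (0 : ℝ) 1, ν.real (Set.Ico t 1) ≤ C * (1 - t) ^ s := by
        intro t ht
        have h1 : 0 ≤ 1 - t := by linarith [ht.2]
        exact ENNReal.toReal_le_of_le_ofReal (by positivity) (hCt t ht)
      intro t ht
      rcases le_or_gt 0 t with h0 | h0
      · exact hreal t ⟨h0, ht⟩
      -- `ν` has no mass on negative `t`, and `(1 - t) ^ s` exceeds `1` there.
      · have h1 : ν.real (Set.Ico t 1) ≤ ν.real (Set.Ico 0 1) := by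
          refine ENNReal.toReal_mono (measure_ne_top _ _) ?_
          calc ν (Set.Ico t 1) ≤ ν (Set.Ico 0 1 ∪ (Set.Ico 0 1)ᶜ) :=
                measure_mono (by rw [Set.union_compl_self]; exact Set.subset_univ _)
            _ ≤ ν (Set.Ico 0 1) + ν (Set.Ico 0 1)ᶜ := measure_union_le _ _
            _ = ν (Set.Ico 0 1) := by rw [hsupp', add_zero]
        have h2 := hreal 0 ⟨le_rfl, one_pos⟩
        have h3 : (1 - 0 : ℝ) ^ s ≤ (1 - t) ^ s :=
          Real.rpow_le_rpow (by norm_num) (by linarith) hs0.le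
        nlinarith
    exact exists_compact θ α β hθ hα₁ hα₂ hβ₁ hβ₂ m hm0
      (moment_tendsto_shift m hm0 s θ hs0 hθ (moment_tendsto ν s C hC' hv))
  · rintro ⟨T, hTc, hT⟩
    have hint : ∀ j : ℕ, IntegrableOn (fun t : ℝ => t ^ j) (Set.Ico 0 1) ν := by
      intro j
      refine Measure.integrableOn_of_bounded (M := 1) (measure_ne_top _ _) (by fun_prop) ?_
      filter_upwards [ae_restrict_mem measurableSet_Ico] with t ht
      rw [Real.norm_eq_abs, abs_of_nonneg (pow_nonneg ht.1 _)]
      exact pow_le_one₀ ht.1 ht.2.le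
    have hanti : Antitone m := fun i j hij =>
      setIntegral_mono_on (hint j) (hint i) measurableSet_Ico fun t ht =>
        pow_le_pow_of_le_one ht.1 ht.2.le hij
    have h1 := (moment_tendsto_of_compact θ α β hθ m hm0 hanti T hTc hT).const_mul 2
    rw [mul_zero] at h1
    have hv : Filter.Tendsto (fun t : ℝ => ν.real (Set.Ico t 1) / (1 - t) ^ s)
        (nhdsWithin 1 (Set.Iio 1)) (nhds 0) := by
      refine vanishing_of_seq ν s hs0 (squeeze_zero'
        (Filter.Eventually.of_forall fun N => by positivity) ?_ h1)
      filter_upwards [Filter.eventually_gt_atTop 0] with N hN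
      rw [← mul_assoc]
      exact mul_le_mul_of_nonneg_right (measure_le_moment ν N hN) (by positivity)
    obtain ⟨C, hC, hCt⟩ := carleson_of_vanishing ν s hs0 hv
    refine ⟨⟨C, hC, fun t ht => ?_⟩, hv⟩
    exact ENNReal.le_ofReal_iff_toReal_le (measure_ne_top _ _)
      (mul_nonneg hC.le (Real.rpow_nonneg (by linarith [ht.2]) _)) |>.2 (hCt t ht)
end

section
/- Let θ > 0 and let m be a nonnegative integer. For every entire function f(z) = Σ_{n≥0} a_n z^n, one has Σ_{n≥0} (n+θ)^m |a_n|² n! < ∞ if and only if (1/π) ∫_ℂ |z^m f(z)|² e^{−|z|²} dA(z) < ∞, where dA is Lebesgue area measure on ℂ. (That is, for α = m ∈ ℕ the weighted Fock space F²_{θ,α} coincides with the Fock–Sobolev space of entire functions f with z^m f ∈ F².) -/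
/-!
The monomials are orthogonal for the Gaussian measure, so the Fock-Sobolev norm is computed
exactly from the Taylor coefficients:
`∫_ℂ |z^m f(z)|² e^{-|z|²} dA(z) = π ∑ₙ |aₙ|² (n+m)!`, as an identity in `[0, ∞]`
(`lintegral_fock_sobolev`). In polar coordinates this is Parseval's identity on each circle
(`hasSum_circle_integral`, `lintegral_circle`) followed by a termwise integration in the radius
(`lintegral_radial`); no integrability is needed, since all terms are nonnegative.

It then remains to compare `(n+m)!` with `(n+θ)^m n!`. From
`n! (n+1)^m ≤ (n+m)! ≤ n! (n+m)^m` together with `n + m ≤ (1 + m/θ)(n + θ)` and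
`n + θ ≤ (1 + θ)(n + 1)`, the two weights are equivalent up to constants depending only on
`m` and `θ`, so the two series converge simultaneously.
-/

open MeasureTheory

open Filter Topology in
/-- Parseval's identity on the circle of radius `r`, obtained from Parseval's identity for
polynomials by passing to the limit along the partial sums of the power series, which are dominated
by `∑ |aₙ| |r|ⁿ`. -/
lemma hasSum_circle_integral {a : ℕ → ℂ} {f : ℂ → ℂ}
    (hf : ∀ z : ℂ, HasSum (fun n : ℕ => a n * z ^ n) (f z)) (r : ℝ) :
    HasSum (fun n : ℕ => 2 * Real.pi * (‖a n‖ ^ 2 * (r ^ n) ^ 2))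
      (∫ t in (0 : ℝ)..2 * Real.pi, ‖f (circleMap 0 r t)‖ ^ 2) := by
  rw [hasSum_iff_tendsto_nat_of_nonneg (fun n => by positivity)]
  -- The partial sums, rescaled from the circle of radius `r` to the unit circle, where
  -- `Polynomial.sum_sq_norm_coeff_eq_circleAverage` applies.
  let p : ℕ → Polynomial ℂ := fun N =>
    ∑ n ∈ Finset.range N, Polynomial.monomial n (a n * (r : ℂ) ^ n)
  have hcoeff : ∀ N n, (p N).coeff n = if n < N then a n * (r : ℂ) ^ n else 0 := by
    intro N n
    simp [p, Polynomial.coeff_monomial]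
  have heval : ∀ N (t : ℝ), (p N).eval (circleMap 0 1 t) =
      ∑ n ∈ Finset.range N, a n * (circleMap 0 r t) ^ n := by
    intro N t
    simp [p, Polynomial.eval_finsetSum, circleMap, mul_pow, mul_assoc]
  have hpars : ∀ N, ∑ n ∈ Finset.range N, 2 * Real.pi * (‖a n‖ ^ 2 * (r ^ n) ^ 2) =
      ∫ t in (0 : ℝ)..2 * Real.pi,
        ‖∑ n ∈ Finset.range N, a n * (circleMap 0 r t) ^ n‖ ^ 2 := by
    intro N
    have h := (p N).sum_sq_norm_coeff_eq_circleAverage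
    rw [Real.circleAverage_def, smul_eq_mul] at h
    simp only [heval] at h
    have hs : ∑ n ∈ (p N).support, ‖(p N).coeff n‖ ^ 2 =
        ∑ n ∈ Finset.range N, ‖a n‖ ^ 2 * (r ^ n) ^ 2 := by
      rw [Finset.sum_subset (s₂ := Finset.range N)]
      · refine Finset.sum_congr rfl fun n hn => ?_
        rw [hcoeff, if_pos (Finset.mem_range.1 hn)]
        rw [norm_mul, mul_pow, ← Complex.ofReal_pow, Complex.norm_real, Real.norm_eq_abs, sq_abs]
      · intro n hn
        by_contra h'
        simp [hcoeff] at hn h'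
        omega
      · intro n _ hn
        simp [Polynomial.notMem_support_iff.1 hn]
    rw [← Finset.mul_sum, ← hs, h, mul_inv_cancel_left₀ (by positivity)]
  simp only [hpars]
  have hsum : Summable fun n : ℕ => ‖a n‖ * |r| ^ n := by
    simpa using (hf (r : ℂ)).summable.norm
  refine intervalIntegral.tendsto_integral_filter_of_dominated_convergence
    (fun _ => (∑' n : ℕ, ‖a n‖ * |r| ^ n) ^ 2) ?_ ?_ ?_ ?_
  · exact Eventually.of_forall fun N => by
      apply Continuous.aestronglyMeasurable
      fun_prop
  · refine Eventually.of_forall fun N => Eventually.of_forall fun t _ => ?_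
    rw [norm_pow, norm_norm]
    gcongr
    refine (norm_sum_le _ _).trans ?_
    simpa using hsum.sum_le_tsum (Finset.range N) (fun n _ => by positivity)
  · exact intervalIntegrable_const
  · exact Eventually.of_forall fun t _ =>
      (((hf (circleMap 0 r t)).tendsto_sum_nat).norm.pow 2)

lemma measurable_of_hasSum {a : ℕ → ℂ} {f : ℂ → ℂ}
    (hf : ∀ z : ℂ, HasSum (fun n : ℕ => a n * z ^ n) (f z)) : Measurable f :=
  measurable_of_tendsto_metrizable
    (f := fun N z => ∑ n ∈ Finset.range N, a n * z ^ n)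
    (fun N => by fun_prop)
    (tendsto_pi_nhds.2 fun z => (hf z).tendsto_sum_nat)

/-- Parseval's identity in `[0, ∞]`, over the angular interval `(-π, π)` used by Mathlib's polar
coordinates. -/
lemma lintegral_circle {a : ℕ → ℂ} {f : ℂ → ℂ}
    (hf : ∀ z : ℂ, HasSum (fun n : ℕ => a n * z ^ n) (f z)) (r : ℝ) :
    ∫⁻ t in Set.Ioo (-Real.pi) Real.pi, ENNReal.ofReal (‖f (circleMap 0 r t)‖ ^ 2) =
      ∑' n : ℕ, ENNReal.ofReal (2 * Real.pi * (‖a n‖ ^ 2 * (r ^ n) ^ 2)) := by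
  have h := hasSum_circle_integral hf r
  have hper : Function.Periodic (fun t => ‖f (circleMap 0 r t)‖ ^ 2) (2 * Real.pi) := by
    intro t
    simp only [periodic_circleMap 0 r t]
  have hshift := hper.intervalIntegral_add_eq (-Real.pi) 0
  rw [zero_add, show -Real.pi + 2 * Real.pi = Real.pi by ring] at hshift
  have hsum : Summable fun n : ℕ => ‖a n‖ * |r| ^ n := by
    simpa using (hf (r : ℂ)).summable.norm
  have hint : Integrable (fun t => ‖f (circleMap 0 r t)‖ ^ 2)
      (volume.restrict (Set.Ioo (-Real.pi) Real.pi)) := by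
    refine Integrable.of_bound (C := (∑' n : ℕ, ‖a n‖ * |r| ^ n) ^ 2) ?_ ?_
    · exact (((measurable_of_hasSum hf).comp (continuous_circleMap 0 r).measurable).norm.pow_const
        2).aestronglyMeasurable
    · refine Filter.Eventually.of_forall fun t => ?_
      rw [norm_pow, norm_norm]
      gcongr
      rw [← (hf (circleMap 0 r t)).tsum_eq]
      refine (norm_tsum_le_tsum_norm ?_).trans (le_of_eq ?_)
      · simpa using hsum
      · simp
  rw [← ofReal_integral_eq_lintegral_ofReal hint (Filter.Eventually.of_forall fun t => by
    positivity), ← integral_Ioc_eq_integral_Ioo,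
    ← intervalIntegral.integral_of_le (by linarith [Real.pi_pos]), hshift, ← h.tsum_eq,
    ENNReal.ofReal_tsum_of_nonneg (fun n => by positivity) h.summable]

/-- The substitution `u = r²` turns this integral into half of `Γ(k + 1)`. -/
lemma lintegral_radial (k : ℕ) :
    ∫⁻ r in Set.Ioi (0 : ℝ), ENNReal.ofReal (r ^ (2 * k + 1) * Real.exp (-r ^ 2)) =
      ENNReal.ofReal ((k.factorial : ℝ) / 2) := by
  have hk : (-1 : ℝ) < ((2 * k + 1 : ℕ) : ℝ) := by
    have : (0 : ℝ) ≤ ((2 * k + 1 : ℕ) : ℝ) := Nat.cast_nonneg _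
    linarith
  have hi := integrableOn_rpow_mul_exp_neg_rpow hk two_pos
  have he := integral_rpow_mul_exp_neg_rpow two_pos hk
  simp only [Real.rpow_natCast, Real.rpow_two] at hi he
  rw [← ofReal_integral_eq_lintegral_ofReal hi, he]
  · congr 1
    rw [show (((2 * k + 1 : ℕ) : ℝ) + 1) / 2 = k + 1 by push_cast; ring, Real.Gamma_nat_eq_factorial]
    ring
  · filter_upwards [ae_restrict_mem measurableSet_Ioi] with r hr
    have : (0 : ℝ) < r := hr
    positivity

/-- The Fock-Sobolev norm in terms of Taylor coefficients, valid whether or not it is finite. -/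
lemma lintegral_fock_sobolev {a : ℕ → ℂ} {f : ℂ → ℂ}
    (hf : ∀ z : ℂ, HasSum (fun n : ℕ => a n * z ^ n) (f z)) (m : ℕ) :
    ∫⁻ z : ℂ, ENNReal.ofReal (‖z ^ m * f z‖ ^ 2 * Real.exp (-‖z‖ ^ 2)) =
      ∑' n : ℕ, ENNReal.ofReal (Real.pi * (‖a n‖ ^ 2 * ((n + m).factorial : ℝ))) := by
  have hfm := measurable_of_hasSum hf
  have hcm : ∀ p : ℝ × ℝ, Complex.polarCoord.symm p = circleMap 0 p.1 p.2 := by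
    intro p
    simp [circleMap, Complex.exp_mul_I]
  have hcont : Continuous fun p : ℝ × ℝ => circleMap 0 p.1 p.2 := by
    unfold circleMap; fun_prop
  have hfc : Measurable fun p : ℝ × ℝ => f (circleMap 0 p.1 p.2) := hfm.comp hcont.measurable
  rw [← Complex.lintegral_comp_polarCoord_symm]
  simp only [hcm, polarCoord_target, smul_eq_mul]
  rw [Measure.volume_eq_prod, setLIntegral_prod _ (by
    apply Measurable.aemeasurable
    have := hcont.measurable
    fun_prop)]
  have hinner : ∀ r ∈ Set.Ioi (0 : ℝ),
      (∫⁻ t in Set.Ioo (-Real.pi) Real.pi, ENNReal.ofReal r *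
        ENNReal.ofReal (‖circleMap 0 r t ^ m * f (circleMap 0 r t)‖ ^ 2 *
          Real.exp (-‖circleMap 0 r t‖ ^ 2))) =
      ∑' n : ℕ, ENNReal.ofReal (2 * Real.pi * ‖a n‖ ^ 2) *
        ENNReal.ofReal (r ^ (2 * (n + m) + 1) * Real.exp (-r ^ 2)) := by
    intro r hr
    have hr0 : (0 : ℝ) < r := hr
    have hpt : ∀ t : ℝ, ENNReal.ofReal r *
        ENNReal.ofReal (‖circleMap 0 r t ^ m * f (circleMap 0 r t)‖ ^ 2 *
          Real.exp (-‖circleMap 0 r t‖ ^ 2)) =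
        ENNReal.ofReal (r * (r ^ m) ^ 2 * Real.exp (-r ^ 2)) *
          ENNReal.ofReal (‖f (circleMap 0 r t)‖ ^ 2) := by
      intro t
      rw [← ENNReal.ofReal_mul hr0.le, ← ENNReal.ofReal_mul (by positivity)]
      congr 1
      simp only [norm_mul, norm_pow, norm_circleMap_zero, abs_of_pos hr0]
      ring
    simp only [hpt]
    rw [lintegral_const_mul' _ _ ENNReal.ofReal_ne_top, lintegral_circle hf, ← ENNReal.tsum_mul_left]
    refine tsum_congr fun n => ?_
    rw [← ENNReal.ofReal_mul (by positivity), ← ENNReal.ofReal_mul (by positivity)]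
    congr 1
    ring
  rw [setLIntegral_congr_fun measurableSet_Ioi hinner, lintegral_tsum (fun n => by
    apply Measurable.aemeasurable
    fun_prop)]
  refine tsum_congr fun n => ?_
  rw [lintegral_const_mul' _ _ ENNReal.ofReal_ne_top, lintegral_radial,
    ← ENNReal.ofReal_mul (by positivity)]
  congr 1
  ring

lemma tsum_ofReal_lt_top_iff {u : ℕ → ℝ} (hu : ∀ n, 0 ≤ u n) :
    ∑' n, ENNReal.ofReal (u n) < ⊤ ↔ Summable u := by
  refine ⟨fun h => ?_, fun h => lt_top_iff_ne_top.2 h.tsum_ofReal_ne_top⟩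
  have := ENNReal.summable_toReal h.ne
  simpa only [ENNReal.toReal_ofReal (hu _)] using this

/-- **Remark 1.1.** For `θ > 0` and `m ∈ ℕ`, an entire function
`f(z) = Σ a_n z^n` satisfies `Σ_{n≥0} (n+θ)^m |a_n|² n! < ∞` if and only if
`(1/π) ∫_ℂ |z^m f(z)|² e^{−|z|²} dA(z) < ∞`; that is, `F²_{θ,m}` coincides with the
Fock–Sobolev space of entire `f` with `z^m f ∈ F²`. -/
theorem weighted_fock_eq_fock_sobolev (θ : ℝ) (hθ : 0 < θ) (m : ℕ)
    (a : ℕ → ℂ) (f : ℂ → ℂ)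
    (hf : ∀ z : ℂ, HasSum (fun n : ℕ => a n * z ^ n) (f z)) :
    (Summable fun n : ℕ => ((n : ℝ) + θ) ^ m * ‖a n‖ ^ 2 * (Nat.factorial n : ℝ)) ↔
      ENNReal.ofReal (1 / Real.pi) *
        ∫⁻ z : ℂ, ENNReal.ofReal (‖z ^ m * f z‖ ^ 2 * Real.exp (-‖z‖ ^ 2)) < ⊤ := by
  rw [lintegral_fock_sobolev hf, ← ENNReal.tsum_mul_left]
  simp only [← ENNReal.ofReal_mul (show 0 ≤ 1 / Real.pi by positivity)]
  rw [tsum_ofReal_lt_top_iff (fun n => by positivity)]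
  have hpi : ∀ x : ℝ, 1 / Real.pi * (Real.pi * x) = x := fun x => by field_simp
  simp only [hpi]
  constructor <;> intro h
  · refine Summable.of_nonneg_of_le (fun n => by positivity) (fun n => ?_)
      (h.mul_left ((1 + m / θ) ^ m))
    have h1 : ((n + m).factorial : ℝ) ≤ n.factorial * (n + m : ℝ) ^ m := by
      rw [← Nat.factorial_mul_ascFactorial]
      exact_mod_cast Nat.mul_le_mul_left _ (Nat.ascFactorial_le_pow_add n m)
    have h2 : (n + m : ℝ) ≤ (1 + m / θ) * (n + θ) := by
      have : (1 + m / θ) * (n + θ) = n + m + θ + m / θ * n := by field_simp; ring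
      rw [this]
      have : 0 ≤ m / θ * n := by positivity
      linarith
    calc ‖a n‖ ^ 2 * ((n + m).factorial : ℝ)
        ≤ ‖a n‖ ^ 2 * (n.factorial * ((1 + m / θ) * (n + θ)) ^ m) := by
          gcongr
          exact h1.trans (by gcongr)
      _ = _ := by rw [mul_pow]; ring
  · refine Summable.of_nonneg_of_le (fun n => by positivity) (fun n => ?_)
      (h.mul_left ((1 + θ) ^ m))
    have h1 : (n.factorial * (n + 1 : ℝ) ^ m) ≤ ((n + m).factorial : ℝ) := by
      exact_mod_cast Nat.factorial_mul_pow_le_factorial (m := n) (n := m)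
    have h2 : (n + θ : ℝ) ≤ (1 + θ) * (n + 1) := by
      have : 0 ≤ θ * n := by positivity
      linarith
    calc (n + θ) ^ m * ‖a n‖ ^ 2 * (n.factorial : ℝ)
        ≤ ((1 + θ) * (n + 1)) ^ m * ‖a n‖ ^ 2 * (n.factorial : ℝ) := by gcongr
      _ = (1 + θ) ^ m * (‖a n‖ ^ 2 * (n.factorial * (n + 1 : ℝ) ^ m)) := by rw [mul_pow]; ring
      _ ≤ _ := by gcongr
end
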